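/- Let d ≥ 1 and let S be a finite subset of the unit sphere S^{d-1} ⊂ ℝ^d with |S| = n ≥ 2, and assume |⟨x,y⟩| < 1 for all x, y ∈ S with x ≠ y. Let r = max_{x,y ∈ S, x ≠ y} 2/√(1 − |⟨x,y⟩|). Let ℓ ∈ ℕ⁺ and let δ > 0 satisfy δ < 2/r². Then there exist a positive integer D ≤ ⌈24 log n / δ²⌉ and a map φ : S → ℝ^D all of whose coordinates lie in {−1/√D, 1/√D}, such that for all x, y ∈ S, |⟨φ(x), φ(y)⟩ − f_ℓ(⟨x, y⟩)| < δ. -/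

import Mathlib

/-!
If `g` is a standard Gaussian vector and `u, v` are unit vectors, Grothendieck's identity says that
`𝔼[sgn ⟪u, g⟫ * sgn ⟪v, g⟫] = (2/π) arcsin ⟪u, v⟫ = f ⟪u, v⟫` (`grothendieck_identity`). The pair
`(⟪u, g⟫, ⟪v, g⟫)` has the law of `(X, cos θ X + sin θ Y)` with `cos θ = ⟪u, v⟫` and `X, Y`
independent standard normals, and the planar integral is computed in polar coordinates.

The identity exhibits the matrix `f ⟪v x, v y⟫` as a correlation matrix, hence as a positive
semidefinite matrix, hence as the Gram matrix of new vectors, which are unit since `f 1 = 1`.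
Iterating (`exists_vectors_iterate`) gives unit vectors `w x` with Gram matrix `f_{ℓ-1} ⟪x, y⟫`, and
the random signs `sgn ⟪w x, g⟫` have correlations exactly `f_ℓ ⟪x, y⟫`.

Take `D = ⌈24 log n / δ²⌉` independent copies of `g` as the coordinates of `φ`. By Hoeffding's
inequality a fixed pair deviates by `δ` or more in a fixed direction with probability at most
`exp (-D δ² / 2) ≤ n⁻¹²`, and the union bound over `2 n²` events gives `2 n² · n⁻¹² < 1`
(`exists_sample`).
-/

open Real RealInnerProductSpace

/-- `f(t) = (2/π)·arcsin(t)`. -/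
noncomputable def f (t : ℝ) : ℝ := (2 / Real.pi) * Real.arcsin t

open MeasureTheory ProbabilityTheory

/-- The sign of a real number, with the value `1` at `0` so that it is always `±1`. -/
noncomputable def sgn (t : ℝ) : ℝ := if 0 ≤ t then 1 else -1

lemma sgn_of_nonneg {t : ℝ} (h : 0 ≤ t) : sgn t = 1 := if_pos h

lemma sgn_of_neg {t : ℝ} (h : t < 0) : sgn t = -1 := if_neg (not_le.2 h)

lemma sgn_eq_or (t : ℝ) : sgn t = 1 ∨ sgn t = -1 := by
  unfold sgn; split_ifs <;> simp

@[fun_prop]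
lemma measurable_sgn : Measurable sgn :=
  Measurable.ite measurableSet_Ici measurable_const measurable_const

lemma sgn_mul_of_pos {r : ℝ} (hr : 0 < r) (t : ℝ) : sgn (r * t) = sgn t := by
  unfold sgn; simp [mul_nonneg_iff_of_pos_left hr]

lemma abs_sgn (t : ℝ) : |sgn t| = 1 := by
  rcases sgn_eq_or t with h | h <;> simp [h]

lemma sgn_mul_sgn_mem_Icc (s t : ℝ) : sgn s * sgn t ∈ Set.Icc (-1 : ℝ) 1 := by
  rw [Set.mem_Icc, ← abs_le, abs_mul, abs_sgn, abs_sgn, one_mul]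

/-! ### Grothendieck's identity -/

/-- The pair `(⟪u, g⟫, ⟪v, g⟫)` for a standard Gaussian `g` has the law of `(X, t X + s Y)` with
`X, Y` independent standard normals; comparing characteristic functions avoids treating the
degenerate case `v = ± u` separately. -/
lemma map_inner_pair {ι : Type*} [Fintype ι] (u v : EuclideanSpace ℝ ι) (hu : ‖u‖ = 1)
    (hv : ‖v‖ = 1) (t s : ℝ) (ht : ⟪u, v⟫ = t) (hts : t ^ 2 + s ^ 2 = 1) :
    (stdGaussian (EuclideanSpace ℝ ι)).map (fun g ↦ (⟪u, g⟫, ⟪v, g⟫)) =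
      ((gaussianReal 0 1).prod (gaussianReal 0 1)).map
        (fun p : ℝ × ℝ ↦ (p.1, t * p.1 + s * p.2)) := by
  set A : EuclideanSpace ℝ ι →L[ℝ] ℝ × ℝ := (innerSL ℝ u).prod (innerSL ℝ v) with hA
  set B : ℝ × ℝ →L[ℝ] ℝ × ℝ := (ContinuousLinearMap.fst ℝ ℝ ℝ).prod
    (t • ContinuousLinearMap.fst ℝ ℝ ℝ + s • ContinuousLinearMap.snd ℝ ℝ ℝ) with hB
  have hA' : (fun g ↦ (⟪u, g⟫, ⟪v, g⟫)) = A := by ext g <;> simp [hA]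
  have hB' : (fun p : ℝ × ℝ ↦ (p.1, t * p.1 + s * p.2)) = B := by ext p <;> simp [hB]
  rw [hA', hB']
  have : IsProbabilityMeasure ((stdGaussian (EuclideanSpace ℝ ι)).map A) :=
    Measure.isProbabilityMeasure_map A.continuous.aemeasurable
  have : IsProbabilityMeasure (((gaussianReal 0 1).prod (gaussianReal 0 1)).map B) :=
    Measure.isProbabilityMeasure_map B.continuous.aemeasurable
  apply Measure.ext_of_charFunDual
  ext L
  have hL : ∀ x y : ℝ, L (x, y) = x * L (1, 0) + y * L (0, 1) := by
    intro x y
    have : ((x, y) : ℝ × ℝ) = x • (1, 0) + y • (0, 1) := by ext <;> simp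
    rw [this, map_add, map_smul, map_smul]; simp
  set a := L (1, 0)
  set b := L (0, 1)
  rw [charFunDual_map, charFunDual_map, charFunDual_stdGaussian, charFunDual_prod]
  have h1 : L ∘SL A = innerSL ℝ (a • u + b • v) := by
    ext g
    simp only [ContinuousLinearMap.comp_apply, hA, ContinuousLinearMap.prod_apply,
      innerSL_apply_apply, hL, inner_add_left, real_inner_smul_left]
    ring
  have hg : ∀ M : StrongDual ℝ ℝ, charFunDual (gaussianReal 0 1) M
      = Complex.exp (-((M 1 : ℝ) : ℂ) ^ 2 / 2) := by
    intro M
    have hM : M = M 1 • ContinuousLinearMap.id ℝ ℝ := by ext; simp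
    rw [hM, charFunDual_eq_charFun_map_one]
    have : ⇑(M 1 • ContinuousLinearMap.id ℝ ℝ) = fun x ↦ M 1 * x := by ext; simp
    rw [this, gaussianReal_map_const_mul, charFun_gaussianReal]
    simp
    ring_nf
  rw [hg, hg, ← Complex.exp_add, h1, innerSL_apply_norm]
  congr 1
  have h2 : ‖a • u + b • v‖ ^ 2 = (a + b * t) ^ 2 + (b * s) ^ 2 := by
    rw [norm_add_sq_real, norm_smul, norm_smul, real_inner_smul_left, real_inner_smul_right, ht,
      hu, hv, mul_one, mul_one, Real.norm_eq_abs, Real.norm_eq_abs, sq_abs, sq_abs]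
    linear_combination -b ^ 2 * hts
  have h3 : (L ∘SL B ∘SL ContinuousLinearMap.inl ℝ ℝ ℝ) 1 = a + b * t := by
    simp [hB, hL 1 t, mul_comm]
  have h4 : (L ∘SL B ∘SL ContinuousLinearMap.inr ℝ ℝ ℝ) 1 = b * s := by
    simp [hB, hL 0 s, mul_comm]
  rw [ContinuousLinearMap.comp_assoc, ContinuousLinearMap.comp_assoc, h3, h4]
  rw [← Complex.ofReal_pow, h2]
  push_cast
  ring

lemma integral_radial : ∫ r in Set.Ioi (0 : ℝ), r * Real.exp (-(r ^ 2) / 2) = 1 := by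
  have h := integral_rpow_mul_exp_neg_mul_rpow (p := 2) (q := 1) (b := 1 / 2) (by norm_num)
    (by norm_num) (by norm_num)
  norm_num at h
  rw [← h]
  congr 1
  ext r
  congr 2
  ring

/-- The sign pattern of `cos φ` and `cos (φ - θ)` over one period, cut at
`-π/2 ≤ θ - π/2 ≤ π/2 ≤ θ + π/2 ≤ 3π/2`. -/
lemma integral_angular (θ : ℝ) (h0 : 0 ≤ θ) (h1 : θ ≤ π) :
    ∫ φ in Set.Ioo (-π) π, sgn (cos φ) * sgn (cos (φ - θ)) = 2 * π - 4 * θ := by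
  set g : ℝ → ℝ := fun φ ↦ sgn (cos φ) * sgn (cos (φ - θ)) with hg
  have hm : Measurable g := by fun_prop
  have hint : ∀ a b, IntervalIntegrable g volume a b := fun a b ↦
    (intervalIntegrable_const (c := (1 : ℝ))).mono_fun' hm.aestronglyMeasurable
      (Filter.Eventually.of_forall fun φ ↦ abs_le.2 (sgn_mul_sgn_mem_Icc _ _))
  have hper : Function.Periodic g (2 * π) := by
    intro φ
    simp only [hg]
    rw [show φ + 2 * π - θ = φ - θ + 2 * π by ring, cos_add_two_pi, cos_add_two_pi]
  have hpi := pi_pos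
  rw [← integral_Ioc_eq_integral_Ioo, ← intervalIntegral.integral_of_le (by linarith)]
  have hshift := hper.intervalIntegral_add_eq (-π) (-(π / 2))
  rw [show -π + 2 * π = π by ring, show -(π / 2) + 2 * π = 3 * π / 2 by ring] at hshift
  rw [hshift]
  have e1 : ∫ φ in (-(π / 2))..(θ - π / 2), g φ = -θ := by
    rw [intervalIntegral.integral_congr_Ioo_of_le (g := fun _ ↦ (-1 : ℝ)) (by linarith)]
    · simp
    · rintro φ ⟨ha, hb⟩
      have c1 : 0 ≤ cos φ := cos_nonneg_of_neg_pi_div_two_le_of_le (by linarith) (by linarith)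
      have c2 : cos (φ - θ) < 0 := by
        rw [← cos_neg]
        exact cos_neg_of_pi_div_two_lt_of_lt (by linarith) (by linarith)
      simp [hg, sgn_of_nonneg c1, sgn_of_neg c2]
  have e2 : ∫ φ in (θ - π / 2)..(π / 2), g φ = π - θ := by
    rw [intervalIntegral.integral_congr_Ioo_of_le (g := fun _ ↦ (1 : ℝ)) (by linarith)]
    · simp; ring
    · rintro φ ⟨ha, hb⟩
      have c1 : 0 ≤ cos φ := cos_nonneg_of_neg_pi_div_two_le_of_le (by linarith) (by linarith)
      have c2 : 0 ≤ cos (φ - θ) :=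
        cos_nonneg_of_neg_pi_div_two_le_of_le (by linarith) (by linarith)
      simp [hg, sgn_of_nonneg c1, sgn_of_nonneg c2]
  have e3 : ∫ φ in (π / 2)..(θ + π / 2), g φ = -θ := by
    rw [intervalIntegral.integral_congr_Ioo_of_le (g := fun _ ↦ (-1 : ℝ)) (by linarith)]
    · simp
    · rintro φ ⟨ha, hb⟩
      have c1 : cos φ < 0 := cos_neg_of_pi_div_two_lt_of_lt (by linarith) (by linarith)
      have c2 : 0 ≤ cos (φ - θ) :=
        cos_nonneg_of_neg_pi_div_two_le_of_le (by linarith) (by linarith)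
      simp [hg, sgn_of_neg c1, sgn_of_nonneg c2]
  have e4 : ∫ φ in (θ + π / 2)..(3 * π / 2), g φ = π - θ := by
    rw [intervalIntegral.integral_congr_Ioo_of_le (g := fun _ ↦ (1 : ℝ)) (by linarith)]
    · simp; ring
    · rintro φ ⟨ha, hb⟩
      have c1 : cos φ < 0 := cos_neg_of_pi_div_two_lt_of_lt (by linarith) (by linarith)
      have c2 : cos (φ - θ) < 0 := cos_neg_of_pi_div_two_lt_of_lt (by linarith) (by linarith)
      simp [hg, sgn_of_neg c1, sgn_of_neg c2]
  rw [← intervalIntegral.integral_add_adjacent_intervals (hint _ (θ + π / 2)) (hint _ _),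
    ← intervalIntegral.integral_add_adjacent_intervals (hint _ (π / 2)) (hint _ _),
    ← intervalIntegral.integral_add_adjacent_intervals (hint _ (θ - π / 2)) (hint _ _),
    e1, e2, e3, e4]
  ring

/-- The planar form of Grothendieck's identity, by polar coordinates. -/
lemma integral_gaussian_plane (θ : ℝ) (h0 : 0 ≤ θ) (h1 : θ ≤ π) :
    ∫ p : ℝ × ℝ, sgn p.1 * sgn (cos θ * p.1 + sin θ * p.2)
      ∂((gaussianReal 0 1).prod (gaussianReal 0 1)) = 1 - 2 * θ / π := by
  have hpi := pi_pos
  rw [gaussianReal_of_var_ne_zero 0 one_ne_zero,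
    prod_withDensity (measurable_gaussianPDF 0 1) (measurable_gaussianPDF 0 1),
    integral_withDensity_eq_integral_toReal_smul (by fun_prop)
      (Filter.Eventually.of_forall fun p ↦ ENNReal.mul_lt_top gaussianPDF_lt_top gaussianPDF_lt_top),
    ← Measure.volume_eq_prod, ← integral_comp_polarCoord_symm, polarCoord_target]
  have key : ∀ p ∈ Set.Ioi (0 : ℝ) ×ˢ Set.Ioo (-π) π,
      p.1 • ((gaussianPDF 0 1 (polarCoord.symm p).1 * gaussianPDF 0 1 (polarCoord.symm p).2).toReal •
        (sgn (polarCoord.symm p).1 *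
          sgn (cos θ * (polarCoord.symm p).1 + sin θ * (polarCoord.symm p).2))) =
      (p.1 * Real.exp (-(p.1 ^ 2) / 2)) *
        ((2 * π)⁻¹ * (sgn (cos p.2) * sgn (cos (p.2 - θ)))) := by
    rintro ⟨r, φ⟩ ⟨hr, -⟩
    simp only [Set.mem_Ioi] at hr
    simp only [polarCoord_symm_apply, smul_eq_mul, ENNReal.toReal_mul, toReal_gaussianPDF,
      gaussianPDFReal, sub_zero, NNReal.coe_one, mul_one]
    rw [show cos θ * (r * cos φ) + sin θ * (r * sin φ) = r * cos (φ - θ) by rw [cos_sub]; ring,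
      sgn_mul_of_pos hr, sgn_mul_of_pos hr]
    have e : Real.exp (-(r * cos φ) ^ 2 / 2) * Real.exp (-(r * sin φ) ^ 2 / 2)
        = Real.exp (-(r ^ 2) / 2) := by
      rw [← Real.exp_add]
      congr 1
      linear_combination (-r ^ 2 / 2) * sin_sq_add_cos_sq φ
    have e2 : (√(2 * π))⁻¹ * (√(2 * π))⁻¹ = (2 * π)⁻¹ := by
      rw [← mul_inv, Real.mul_self_sqrt (by positivity)]
    rw [← e, ← e2]
    ring
  rw [setIntegral_congr_fun (measurableSet_Ioi.prod measurableSet_Ioo) key,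
    Measure.volume_eq_prod,
    setIntegral_prod_mul (fun r : ℝ ↦ r * Real.exp (-(r ^ 2) / 2))
      (fun φ ↦ (2 * π)⁻¹ * (sgn (cos φ) * sgn (cos (φ - θ)))),
    integral_radial, integral_const_mul, integral_angular θ h0 h1]
  field_simp
  ring

/-- **Grothendieck's identity**: the signs of the projections of a Gaussian vector onto two unit
vectors have correlation `f` of their inner product. -/
lemma grothendieck_identity {ι : Type*} [Fintype ι] (u v : EuclideanSpace ℝ ι) (hu : ‖u‖ = 1)
    (hv : ‖v‖ = 1) :
    ∫ g, sgn ⟪u, g⟫ * sgn ⟪v, g⟫ ∂(stdGaussian (EuclideanSpace ℝ ι)) = f ⟪u, v⟫ := by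
  have habs : |⟪u, v⟫| ≤ 1 := by simpa [hu, hv] using abs_real_inner_le_norm u v
  obtain ⟨hl, hr⟩ := abs_le.1 habs
  set θ := arccos ⟪u, v⟫ with hθ
  have hcos : cos θ = ⟪u, v⟫ := cos_arccos hl hr
  have hmap := map_inner_pair u v hu hv (cos θ) (sin θ) hcos.symm (cos_sq_add_sin_sq θ)
  have hm : Measurable fun p : ℝ × ℝ ↦ sgn p.1 * sgn p.2 := by fun_prop
  have e1 := integral_map (μ := stdGaussian (EuclideanSpace ℝ ι))
    (φ := fun g ↦ (⟪u, g⟫, ⟪v, g⟫)) (by fun_prop) hm.aestronglyMeasurable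
  have e2 := integral_map (μ := (gaussianReal 0 1).prod (gaussianReal 0 1))
    (φ := fun p : ℝ × ℝ ↦ (p.1, cos θ * p.1 + sin θ * p.2)) (by fun_prop) hm.aestronglyMeasurable
  rw [hmap] at e1
  rw [← e1, e2, integral_gaussian_plane θ (arccos_nonneg _) (arccos_le_pi _), f, hθ, arccos]
  field_simp
  ring

/-! ### Gram matrices of the iterates -/

lemma f_one : f 1 = 1 := by
  rw [f, arcsin_one]
  field_simp

open scoped MatrixOrder in
/-- Every real positive semidefinite matrix is a Gram matrix. -/
lemma exists_gram {κ : Type*} [Fintype κ] (M : Matrix κ κ ℝ) (hM : M.PosSemidef) :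
    ∃ w : κ → EuclideanSpace ℝ κ, ∀ x y, ⟪w x, w y⟫ = M x y := by
  classical
  obtain ⟨X, hX, -, hXM⟩ :=
    CFC.exists_sqrt_of_isSelfAdjoint_of_quasispectrumRestricts hM.isHermitian
      (QuasispectrumRestricts.nnreal_of_nonneg hM.nonneg)
  refine ⟨fun x ↦ WithLp.toLp 2 (X x), fun x y ↦ ?_⟩
  rw [← hXM, Matrix.mul_apply, PiLp.inner_apply]
  refine Finset.sum_congr rfl fun i _ ↦ ?_
  have : X i y = X y i := by
    have := congrFun (congrFun hX.star_eq i) y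
    simpa [Matrix.star_apply] using this.symm
  simp [this, mul_comm]

/-- Applying `f` entrywise to a Gram matrix of unit vectors gives a Gram matrix: by Grothendieck's
identity it is the correlation matrix of random signs. -/
lemma exists_vectors_f {κ ι : Type*} [Fintype κ] [Fintype ι] (v : κ → EuclideanSpace ℝ ι)
    (hv : ∀ x, ‖v x‖ = 1) :
    ∃ w : κ → EuclideanSpace ℝ κ, ∀ x y, ⟪w x, w y⟫ = f ⟪v x, v y⟫ := by
  apply exists_gram (Matrix.of fun x y ↦ f ⟪v x, v y⟫)
  apply Matrix.PosSemidef.of_dotProduct_mulVec_nonneg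
  · ext x y
    simp [real_inner_comm]
  · intro c
    -- The quadratic form is the second moment of `∑ x, c x * sgn ⟪v x, g⟫`.
    have hi : ∀ x y, Integrable (fun g ↦ c x * (sgn ⟪v x, g⟫ * sgn ⟪v y, g⟫ * c y))
        (stdGaussian (EuclideanSpace ℝ ι)) := fun x y ↦
      (((Integrable.of_mem_Icc (-1) 1 (by fun_prop)
        (Filter.Eventually.of_forall fun g ↦ sgn_mul_sgn_mem_Icc _ _)).mul_const _).const_mul _)
    have : star c ⬝ᵥ (Matrix.of fun x y ↦ f ⟪v x, v y⟫).mulVec c =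
        ∫ g, (∑ x, c x * sgn ⟪v x, g⟫) ^ 2 ∂(stdGaussian (EuclideanSpace ℝ ι)) := by
      have e : ∀ g, (∑ x, c x * sgn ⟪v x, g⟫) ^ 2 =
          ∑ x, ∑ y, c x * (sgn ⟪v x, g⟫ * sgn ⟪v y, g⟫ * c y) := by
        intro g
        rw [sq, Finset.sum_mul_sum]
        exact Finset.sum_congr rfl fun x _ ↦ Finset.sum_congr rfl fun y _ ↦ by ring
      simp_rw [e]
      rw [integral_finsetSum _ fun x _ ↦ integrable_finsetSum _ fun y _ ↦ hi x y]
      simp only [dotProduct, Matrix.mulVec, Matrix.of_apply, star_trivial, Finset.mul_sum]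
      refine Finset.sum_congr rfl fun x _ ↦ ?_
      rw [integral_finsetSum _ fun y _ ↦ hi x y]
      refine Finset.sum_congr rfl fun y _ ↦ ?_
      rw [integral_const_mul, integral_mul_const, grothendieck_identity _ _ (hv x) (hv y)]
    rw [this]
    exact integral_nonneg fun g ↦ sq_nonneg _

/-- The entrywise iterate `f_k` of a Gram matrix of unit vectors is again such a Gram matrix. -/
lemma exists_vectors_iterate {κ : Type} [Fintype κ] {d : ℕ} (v : κ → EuclideanSpace ℝ (Fin d))
    (hv : ∀ x, ‖v x‖ = 1) (k : ℕ) :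
    ∃ (m : ℕ) (w : κ → EuclideanSpace ℝ (Fin m)),
      (∀ x, ‖w x‖ = 1) ∧ ∀ x y, ⟪w x, w y⟫ = f^[k] ⟪v x, v y⟫ := by
  induction k with
  | zero => exact ⟨d, v, hv, fun x y ↦ rfl⟩
  | succ k ih =>
    obtain ⟨m, w, hw, hwv⟩ := ih
    obtain ⟨w', hw'⟩ := exists_vectors_f w hw
    let e := LinearIsometryEquiv.piLpCongrLeft 2 ℝ ℝ (Fintype.equivFin κ)
    refine ⟨Fintype.card κ, fun x ↦ e (w' x), fun x ↦ ?_, fun x y ↦ ?_⟩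
    · rw [e.norm_map, norm_eq_sqrt_real_inner, hw', real_inner_self_eq_norm_sq, hw]
      simp [f_one]
    · rw [e.inner_map_map, hw', hwv, Function.iterate_succ_apply']

/-! ### Sampling and the sketch -/

/-- Hoeffding's inequality and a union bound: some sample of size `D` has all the empirical means
below the true means plus `δ`. -/
lemma exists_sample {Ω J : Type*} [MeasurableSpace Ω] [Fintype J] (μ : Measure Ω)
    [IsProbabilityMeasure μ] (h : J → Ω → ℝ) (hm : ∀ j, Measurable (h j))
    (hb : ∀ j ω, h j ω ∈ Set.Icc (-1 : ℝ) 1) (D : ℕ) (hD : 0 < D) (δ : ℝ) (hδ : 0 < δ)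
    (hJ : Fintype.card J * Real.exp (-(D * δ ^ 2) / 2) < 1) :
    ∃ ω : Fin D → Ω, ∀ j, ∑ i, (h j (ω i) - ∫ a, h j a ∂μ) < D * δ := by
  by_contra! hcon
  set P := Measure.pi fun _ : Fin D ↦ μ with hP
  have hle : ∀ j, P.real {ω | D * δ ≤ ∑ i, (h j (ω i) - ∫ a, h j a ∂μ)} ≤
      Real.exp (-(D * δ ^ 2) / 2) := by
    intro j
    have hind : iIndepFun (fun (i : Fin D) (ω : Fin D → Ω) ↦ h j (ω i) - ∫ a, h j a ∂μ) P :=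
      iIndepFun_pi (X := fun _ a ↦ h j a - ∫ a, h j a ∂μ)
        fun i ↦ ((hm j).sub_const _).aemeasurable
    have hsub : ∀ i ∈ (Finset.univ : Finset (Fin D)),
        HasSubgaussianMGF (fun ω : Fin D → Ω ↦ h j (ω i) - ∫ a, h j a ∂μ) 1 P := by
      intro i _
      have h1 := hasSubgaussianMGF_of_mem_Icc (μ := μ) (hm j).aemeasurable
        (Filter.Eventually.of_forall (hb j))
      have hc : (‖(1 : ℝ) - -1‖₊ / 2) ^ 2 = 1 := by
        ext; norm_num
      rw [hc] at h1
      have hev := measurePreserving_eval (fun _ : Fin D ↦ μ) i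
      refine HasSubgaussianMGF.of_map (Y := Function.eval i)
        (X := fun a ↦ h j a - ∫ a, h j a ∂μ) hev.measurable.aemeasurable ?_
      rw [hP, hev.map_eq]
      exact h1
    refine (HasSubgaussianMGF.measure_sum_ge_le_of_iIndepFun hind hsub
      (by positivity)).trans (le_of_eq ?_)
    have hD' : (D : ℝ) ≠ 0 := by positivity
    congr 1
    simp
    field_simp
  have huniv : (⋃ j, {ω : Fin D → Ω | D * δ ≤ ∑ i, (h j (ω i) - ∫ a, h j a ∂μ)}) = Set.univ := by
    ext ω
    simpa using hcon ω
  have h1 := measureReal_iUnion_fintype_le (μ := P)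
    fun j ↦ {ω : Fin D → Ω | D * δ ≤ ∑ i, (h j (ω i) - ∫ a, h j a ∂μ)}
  rw [huniv, probReal_univ] at h1
  have h2 := h1.trans (Finset.sum_le_sum fun j _ ↦ hle j)
  rw [Finset.sum_const, Finset.card_univ, nsmul_eq_mul] at h2
  linarith

/-- For a set `S` of `n ≥ 2` unit vectors in `ℝ^d` with pairwise `|⟨x,y⟩| < 1`,
`r = max_{x ≠ y} 2/√(1 − |⟨x,y⟩|)`, `ℓ ≥ 1`, and `0 < δ < 2/r²`, there are a
positive integer `D ≤ ⌈24 log n / δ²⌉` and a map `φ : S → D^{-1/2}{−1,1}^D` with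
`|⟨φ(x), φ(y)⟩ − f_ℓ(⟨x,y⟩)| < δ` for all `x, y ∈ S`. -/
theorem sketch_iterate_f (d n : ℕ) (hd : 1 ≤ d)
    (S : Finset (EuclideanSpace ℝ (Fin d))) (hS : ∀ x ∈ S, ‖x‖ = 1)
    (hcard : S.card = n) (hn : 2 ≤ n)
    (hip : ∀ x ∈ S, ∀ y ∈ S, x ≠ y → |⟪x, y⟫| < 1)
    (r : ℝ)
    (hr : IsGreatest {t : ℝ | ∃ x ∈ S, ∃ y ∈ S, x ≠ y ∧
            t = 2 / Real.sqrt (1 - |⟪x, y⟫|)} r)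
    (ℓ : ℕ) (hℓ : 1 ≤ ℓ) (δ : ℝ) (hδ0 : 0 < δ) (hδ : δ < 2 / r ^ 2) :
    ∃ D : ℕ, 0 < D ∧ (D : ℤ) ≤ ⌈24 * Real.log n / δ ^ 2⌉ ∧
      ∃ φ : EuclideanSpace ℝ (Fin d) → EuclideanSpace ℝ (Fin D),
        (∀ x ∈ S, ∀ i, φ x i = 1 / Real.sqrt D ∨ φ x i = -(1 / Real.sqrt D)) ∧
        ∀ x ∈ S, ∀ y ∈ S, |⟪φ x, φ y⟫ - f^[ℓ] ⟪x, y⟫| < δ := by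
  classical
  obtain ⟨k, rfl⟩ : ∃ k, ℓ = k + 1 := ⟨ℓ - 1, by omega⟩
  have hn' : (2 : ℝ) ≤ n := by exact_mod_cast hn
  have hlog : 0 < Real.log n := Real.log_pos (by linarith)
  have hpos : 0 < 24 * Real.log n / δ ^ 2 := by positivity
  set D := ⌈24 * Real.log n / δ ^ 2⌉₊ with hDdef
  have hD : 0 < D := Nat.ceil_pos.2 hpos
  have hDδ : 24 * Real.log n ≤ D * δ ^ 2 := by
    rw [← div_le_iff₀ (by positivity)]
    exact Nat.le_ceil _
  obtain ⟨m, w, hw, hwv⟩ := exists_vectors_iterate (κ := S) (fun x ↦ (x : EuclideanSpace ℝ (Fin d)))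
    (fun x ↦ hS x x.2) k
  -- The Boolean index selects the upper or the lower deviation.
  let h : S × S × Bool → EuclideanSpace ℝ (Fin m) → ℝ := fun j g ↦
    (if j.2.2 then 1 else -1) * (sgn ⟪w j.1, g⟫ * sgn ⟪w j.2.1, g⟫)
  have hJ : Fintype.card (S × S × Bool) * Real.exp (-(D * δ ^ 2) / 2) < 1 := by
    have h1 : Real.exp (-(D * δ ^ 2) / 2) ≤ ((n : ℝ) ^ 12)⁻¹ := by
      have h2 : ((n : ℝ) ^ 12)⁻¹ = Real.exp (-(12 * Real.log n)) := by
        rw [Real.exp_neg, mul_comm, Real.exp_mul, Real.exp_log (by linarith)]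
        norm_cast
      rw [h2]
      exact Real.exp_le_exp.2 (by linarith)
    have hc : (Fintype.card (S × S × Bool) : ℝ) = 2 * n ^ 2 := by
      simp [hcard]; ring
    rw [hc]
    refine (mul_le_mul_of_nonneg_left h1 (by positivity)).trans_lt ?_
    rw [← div_eq_mul_inv, div_lt_one (by positivity)]
    have h10 : (2 : ℝ) ^ 10 ≤ n ^ 10 := pow_le_pow_left₀ (by norm_num) hn' 10
    have : (n : ℝ) ^ 12 = n ^ 10 * n ^ 2 := by ring
    rw [this]
    exact mul_lt_mul_of_pos_right (by linarith) (by positivity)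
  obtain ⟨g, hg⟩ := exists_sample (stdGaussian (EuclideanSpace ℝ (Fin m))) h
    (fun j ↦ by fun_prop)
    (fun j g ↦ by
      have := sgn_mul_sgn_mem_Icc ⟪w j.1, g⟫ ⟪w j.2.1, g⟫
      rw [Set.mem_Icc] at this ⊢
      simp only [h]
      split_ifs <;> constructor <;> linarith)
    D hD δ hδ0 hJ
  have hDR : (0 : ℝ) < D := by exact_mod_cast hD
  refine ⟨D, hD, ?_, fun x ↦ if hx : x ∈ S then
    WithLp.toLp 2 fun i ↦ 1 / √D * sgn ⟪w ⟨x, hx⟩, g i⟫ else 0, ?_, ?_⟩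
  · rw [hDdef, Int.natCast_ceil_eq_ceil hpos.le]
  · intro x hx i
    rcases sgn_eq_or ⟪w ⟨x, hx⟩, g i⟫ with hs | hs <;> simp [hx, hs]
  · intro x hx y hy
    have hmean := grothendieck_identity (w ⟨x, hx⟩) (w ⟨y, hy⟩) (hw _) (hw _)
    rw [hwv, ← Function.iterate_succ_apply' f k] at hmean
    have hinner : ⟪(WithLp.toLp 2 fun i ↦ 1 / √D * sgn ⟪w ⟨x, hx⟩, g i⟫ : EuclideanSpace ℝ (Fin D)),
        WithLp.toLp 2 fun i ↦ 1 / √D * sgn ⟪w ⟨y, hy⟩, g i⟫⟫ =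
        (∑ i, sgn ⟪w ⟨x, hx⟩, g i⟫ * sgn ⟪w ⟨y, hy⟩, g i⟫) / D := by
      rw [PiLp.inner_apply, Finset.sum_div]
      refine Finset.sum_congr rfl fun i _ ↦ ?_
      have hs : √(D : ℝ) * √D = D := Real.mul_self_sqrt hDR.le
      simp only [RCLike.inner_apply, conj_trivial]
      have hs0 : √(D : ℝ) ≠ 0 := (Real.sqrt_pos.2 hDR).ne.symm
      field_simp
      rw [sq, hs]
      ring
    have hup := hg (⟨x, hx⟩, ⟨y, hy⟩, true)
    have hlo := hg (⟨x, hx⟩, ⟨y, hy⟩, false)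
    simp only [h, if_true, one_mul, Bool.false_eq_true, if_false, integral_const_mul, hmean,
      Finset.sum_sub_distrib, ← Finset.mul_sum, Finset.sum_const, Finset.card_univ,
      Fintype.card_fin, nsmul_eq_mul] at hup hlo
    beta_reduce
    rw [dif_pos hx, dif_pos hy, hinner, abs_lt, lt_sub_iff_add_lt, sub_lt_iff_lt_add,
      lt_div_iff₀ hDR, div_lt_iff₀ hDR]
    constructor <;> linarith
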